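/- Summing the conservative cut-cell update over all cells of a periodic grid, interior fluxes cancel and the total fluid conserved quantity satisfies ∫_{Ω_f^{n+1}} w^{n+1} = ∫_{Ω_f^n} w^n + Δt Σ_F S_F f_F, provided the swept-quantity compatibility Σ_F Δw_F^n = Σ_C (α_C^{n+1} - α_C^n) w_C^n holds. -/

import Mathlib

/-! A shift of a periodic grid permutes its cells, so the flux entering all cells through their
backward faces equals the flux leaving them through their forward faces. What remains is a discrete
product rule, `(1 - α') w' - (1 - α) w = (1 - α') (w' - w) - (α' - α) w`: the update prescribes the
first term on the right, and the swept quantities compensate the second one. -/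

section CutCellConservation

variable {ι D K V : Type*}

/-- The total flux into the cell `c` through its interior faces. The permutation `pred d` sends a
cell to its backward neighbor in the direction `d`, and `F d c` is the flux, already weighted by
aperture and mesh width, from `c` to its forward neighbor. -/
def netInflow [Fintype D] [AddCommGroup V] (pred : D → Equiv.Perm ι) (F : D → ι → V) (c : ι) : V :=
  ∑ d, (F d (pred d c) - F d c)

theorem sum_netInflow [Fintype ι] [Fintype D] [AddCommGroup V] (pred : D → Equiv.Perm ι)
    (F : D → ι → V) : ∑ c, netInflow pred F c = 0 := by
  simp only [netInflow]
  rw [Finset.sum_comm]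
  refine Finset.sum_eq_zero fun d _ ↦ ?_
  rw [Finset.sum_sub_distrib, Equiv.sum_comp, sub_self]

/-- The discrete integral `∫_{Ω_f} w` over the fluid domain of a grid whose cells have volume `vol`
and solid volume fractions `α`. -/
def fluidIntegral [Fintype ι] [Ring K] [AddCommGroup V] [Module K V] (vol : K) (α : ι → K)
    (w : ι → V) : V :=
  vol • ∑ c, (1 - α c) • w c

theorem fluidIntegral_sub_fluidIntegral [Fintype ι] [Ring K] [AddCommGroup V] [Module K V]
    (vol : K) (α α' : ι → K) (w w' : ι → V) :
    fluidIntegral vol α' w' - fluidIntegral vol α w =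
      vol • (∑ c, (1 - α' c) • (w' c - w c) - ∑ c, (α' c - α c) • w c) := by
  simp only [fluidIntegral, ← smul_sub, ← Finset.sum_sub_distrib]
  congr! 2 with c
  simp only [sub_smul, smul_sub]
  abel

theorem global_conservation_general [Fintype ι] [Fintype D] [Field K] [AddCommGroup V] [Module K V]
    {Δt vol : K} (hvol : vol ≠ 0) {α α' : ι → K} {w w' : ι → V}
    (pred : D → Equiv.Perm ι) (F : D → ι → V) {bnd swept : ι → V}
    (hupdate : ∀ c, (1 - α' c) • (w' c - w c) =
      Δt • netInflow pred F c + (Δt / vol) • bnd c + swept c)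
    (hswept : ∑ c, swept c = ∑ c, (α' c - α c) • w c) :
    fluidIntegral vol α' w' = fluidIntegral vol α w + Δt • ∑ c, bnd c := by
  have sum_update : ∑ c, (1 - α' c) • (w' c - w c) =
      (Δt / vol) • ∑ c, bnd c + ∑ c, (α' c - α c) • w c := by
    simp only [hupdate, Finset.sum_add_distrib, ← Finset.smul_sum, sum_netInflow, smul_zero,
      zero_add, hswept]
  rw [← sub_eq_iff_eq_add']
  calc fluidIntegral vol α' w' - fluidIntegral vol α w
      = vol • (∑ c, (1 - α' c) • (w' c - w c) - ∑ c, (α' c - α c) • w c) :=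
        fluidIntegral_sub_fluidIntegral vol α α' w w'
    _ = vol • (Δt / vol) • ∑ c, bnd c := by rw [sum_update, add_sub_cancel_right]
    _ = Δt • ∑ c, bnd c := by rw [smul_smul, mul_div_cancel₀ _ hvol]

end CutCellConservation

/-- Global conservation on a periodic Cartesian grid: summing the conservative cut-cell
update over all cells, the interior fluxes cancel by telescoping and, provided the
swept-quantity compatibility holds, the total fluid conserved quantity satisfies
`∫_{Ω_f^{n+1}} w^{n+1} = ∫_{Ω_f^n} w^n + Δt ∑_F S_F f_F`. -/
theorem global_conservation (N M : ℕ) [NeZero N] [NeZero M]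
    (Δt Δx Δy : ℝ) (hΔx : 0 < Δx) (hΔy : 0 < Δy)
    (α α' : ZMod N × ZMod M → ℝ)
    (hα : ∀ c, α c ∈ Set.Icc (0 : ℝ) 1) (hα' : ∀ c, α' c ∈ Set.Icc (0 : ℝ) 1)
    (w w' : ZMod N × ZMod M → Fin 4 → ℝ)
    -- `fE c` (resp. `fN c`) is the flux through the face shared by cell `c` and its right
    -- (resp. top) neighbor, with solid surface fraction `κE c` (resp. `κN c`).
    (fE fN : ZMod N × ZMod M → Fin 4 → ℝ)
    (κE κN : ZMod N × ZMod M → ℝ)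
    -- `bnd c = ∑_{F ∈ c} S_F f_F` and `swept c = ∑_{F ∈ c} Δw_F^n`.
    (bnd swept : ZMod N × ZMod M → Fin 4 → ℝ)
    (hupdate : ∀ c : ZMod N × ZMod M,
      (1 - α' c) • (w' c - w c) =
        Δt • (((1 - κE (c.1 - 1, c.2)) / Δx) • fE (c.1 - 1, c.2)
            - ((1 - κE c) / Δx) • fE c
            + ((1 - κN (c.1, c.2 - 1)) / Δy) • fN (c.1, c.2 - 1)
            - ((1 - κN c) / Δy) • fN c)
          + (Δt / (Δx * Δy)) • bnd c + swept c)
    (hswept : ∑ c : ZMod N × ZMod M, swept c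
        = ∑ c : ZMod N × ZMod M, (α' c - α c) • w c) :
    (Δx * Δy) • ∑ c : ZMod N × ZMod M, (1 - α' c) • w' c
      = (Δx * Δy) • ∑ c : ZMod N × ZMod M, (1 - α c) • w c
        + Δt • ∑ c : ZMod N × ZMod M, bnd c := by
  exact global_conservation_general (mul_pos hΔx hΔy).ne'
    ![(Equiv.subRight 1).prodCongr (.refl _), (Equiv.refl _).prodCongr (.subRight 1)]
    ![fun c ↦ ((1 - κE c) / Δx) • fE c, fun c ↦ ((1 - κN c) / Δy) • fN c]
    (fun c ↦ by simp [hupdate, netInflow, Prod.map, add_sub_assoc, -Finset.sum_sub_distrib]) hswept
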